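/- With the notation of the previous statement, $\lim_{\beta \downarrow 0} \tfrac{1}{\beta}\big(C^\beta(x,\eta) - \tfrac12|\bar\eta - x|^2\big) = \tfrac12\mathcal{W}_2^2(\gamma_{\bar\eta}, \eta)$ for every $x \in \mathbb{R}^d$ and $\eta \in \mathcal{P}_2(\mathbb{R}^d)$. In particular, $\lim_{\beta\downarrow 0}\tfrac1\beta C^\beta(x,\eta) = \tfrac12\mathcal{W}_2^2(\gamma_x,\eta)$ if $\bar\eta = x$, and $= +\infty$ otherwise. -/

import Mathlib

open MeasureTheory ProbabilityTheory Filter Topology Set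
open scoped ENNReal RealInnerProductSpace

noncomputable section

abbrev Euc (d : ℕ) := EuclideanSpace ℝ (Fin d)

/-- Density of the Gaussian with mean `x` and identity covariance. -/
def gaussDensity {d : ℕ} (x y : Euc d) : ℝ :=
  (2 * Real.pi) ^ (-(d : ℝ) / 2) * Real.exp (-‖y - x‖ ^ 2 / 2)

/-- Gaussian measure with mean `x` and identity covariance. -/
def gaussian {d : ℕ} (x : Euc d) : Measure (Euc d) :=
  volume.withDensity fun y => ENNReal.ofReal (gaussDensity x y)

/-- Finite second moment. -/
def FiniteSecondMoment {d : ℕ} (μ : Measure (Euc d)) : Prop :=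
  ∫⁻ x, ENNReal.ofReal (‖x‖ ^ 2) ∂μ < ⊤

/-- Barycenter of a measure. -/
def bary {d : ℕ} (μ : Measure (Euc d)) : Euc d := ∫ x, x ∂μ

open Classical in
/-- Relative entropy `H(ρ | η)`, valued in `ℝ≥0∞`. -/
def relEnt {d : ℕ} (ρ η : Measure (Euc d)) : ℝ≥0∞ :=
  if ρ ≪ η ∧ Integrable (fun x => Real.log (ρ.rnDeriv η x).toReal) ρ then
    ENNReal.ofReal (∫ x, Real.log (ρ.rnDeriv η x).toReal ∂ρ)
  else ⊤

/-- Squared 2-Wasserstein distance. -/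
def W2sq {d : ℕ} (μ ν : Measure (Euc d)) : ℝ≥0∞ :=
  ⨅ (π : Measure (Euc d × Euc d)) (_ : π.fst = μ ∧ π.snd = ν),
    ∫⁻ p, ENNReal.ofReal (‖p.1 - p.2‖ ^ 2) ∂π


/-- Static Schrödinger--Bass cost `C^β(x, η)`. -/
def SBcost {d : ℕ} (β : ℝ) (x : Euc d) (η : Measure (Euc d)) : ℝ≥0∞ :=
  ⨅ (κ : Measure (Euc d))
      (_ : IsProbabilityMeasure κ ∧ FiniteSecondMoment κ ∧ bary κ = bary η),
    relEnt κ (gaussian x) + ENNReal.ofReal (β / 2) * W2sq κ η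

lemma aux_ui {d : ℕ} (μ : Measure (Euc d)) (h : Euc d → ℝ≥0∞) (hm : Measurable h)
    (hfin : ∫⁻ y, h y ∂μ ≠ ⊤) (e : ℝ≥0∞) (he : 0 < e) :
    ∃ δ : ℝ≥0∞, 0 < δ ∧ ∀ ν : Measure (Euc d), ν ≤ μ → ν univ ≤ δ → ∫⁻ y, h y ∂ν ≤ e := by
  have hlim : Tendsto (fun n : ℕ => ∫⁻ y, (h y - (n : ℝ≥0∞)) ∂μ) atTop (𝓝 (∫⁻ _, 0 ∂μ)) := by
    refine tendsto_lintegral_of_dominated_convergence h (fun n => by fun_prop)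
      (fun n => ae_of_all _ fun y => tsub_le_self) hfin ?_
    filter_upwards [ae_lt_top hm hfin] with y hy
    obtain ⟨N, hN⟩ := ENNReal.exists_nat_gt hy.ne
    refine tendsto_const_nhds.congr' ?_
    filter_upwards [eventually_ge_atTop N] with n hn
    rw [eq_comm, tsub_eq_zero_iff_le]
    exact hN.le.trans (by exact_mod_cast hn)
  rw [lintegral_zero] at hlim
  have he2 : 0 < e / 2 := ENNReal.half_pos he.ne'
  obtain ⟨n, hn⟩ := (hlim.eventually (gt_mem_nhds he2)).exists
  refine ⟨e / 2 / (n + 1), ENNReal.div_pos he2.ne' (by finiteness), fun ν hν hδ => ?_⟩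
  calc ∫⁻ y, h y ∂ν ≤ ∫⁻ y, ((n : ℝ≥0∞) + (h y - n)) ∂ν := lintegral_mono fun y => le_add_tsub
    _ = n * ν univ + ∫⁻ y, (h y - n) ∂ν := by
        rw [lintegral_add_left measurable_const, lintegral_const]
    _ ≤ (n + 1) * (e / 2 / (n + 1)) + ∫⁻ y, (h y - n) ∂μ := by
        gcongr
        exact le_self_add
    _ ≤ e / 2 + e / 2 := by
        gcongr
        exact ENNReal.mul_div_le
    _ = e := ENNReal.add_halves e

lemma aux_kl (f δ : ℝ) (hf : 0 ≤ f) (hδ : 0 < δ) :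
    1 - f ≤ δ + InformationTheory.klFun f / δ := by
  have hk : (1 - √f) ^ 2 ≤ InformationTheory.klFun f := by
    rcases hf.eq_or_lt with rfl | hf
    · simp [InformationTheory.klFun]
    · have hs : 0 < √f := Real.sqrt_pos.2 hf
      have h1 := Real.one_sub_inv_le_log_of_pos hs
      rw [Real.log_sqrt hf.le] at h1
      have h2 : √f * √f = f := Real.mul_self_sqrt hf.le
      rw [InformationTheory.klFun_apply]
      have h3 : f * (1 - (√f)⁻¹) ≤ f * (Real.log f / 2) := by gcongr
      have h4 : f * (√f)⁻¹ = √f := by field_simp; nlinarith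
      nlinarith
  have h2 : √f * √f = f := Real.mul_self_sqrt hf
  have h5 : 1 - f ≤ δ + (1 - √f) ^ 2 / δ := by
    have : δ + (1 - √f) ^ 2 / δ = (δ ^ 2 + (1 - √f) ^ 2) / δ := by field_simp
    rw [this, le_div_iff₀ hδ]
    nlinarith [sq_nonneg (δ - (1 - √f)), sq_nonneg (1 - √f)]
  have : (1 - √f) ^ 2 / δ ≤ InformationTheory.klFun f / δ := by gcongr
  linarith

lemma aux_relEnt {d : ℕ} (κ γ : Measure (Euc d)) [IsProbabilityMeasure κ]
    [IsProbabilityMeasure γ] : relEnt κ γ = InformationTheory.klDiv κ γ := by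
  rw [InformationTheory.klDiv_def, relEnt]
  have : llr κ γ = fun x => Real.log (κ.rnDeriv γ x).toReal := rfl
  rw [this]
  simp

lemma aux_tv {d : ℕ} (κ γ : Measure (Euc d)) [IsProbabilityMeasure κ]
    [IsProbabilityMeasure γ] (δ : ℝ) (hδ : 0 < δ) (hH : κ ≪ γ) :
    ∫⁻ y, (1 - κ.rnDeriv γ y) ∂γ ≤ ENNReal.ofReal δ + relEnt κ γ * ENNReal.ofReal (1 / δ) := by
  rw [aux_relEnt, InformationTheory.klDiv_eq_lintegral_klFun_of_ac hH]
  rw [← lintegral_mul_const]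
  swap
  · have := InformationTheory.measurable_klFun
    fun_prop
  calc ∫⁻ y, (1 - κ.rnDeriv γ y) ∂γ
      ≤ ∫⁻ y, (ENNReal.ofReal δ + ENNReal.ofReal
          (InformationTheory.klFun (κ.rnDeriv γ y).toReal) * ENNReal.ofReal (1 / δ)) ∂γ := by
        refine lintegral_mono_ae ?_
        filter_upwards [κ.rnDeriv_lt_top γ] with y hy
        have h0 := InformationTheory.klFun_nonneg (ENNReal.toReal_nonneg (a := κ.rnDeriv γ y))
        rw [← ENNReal.ofReal_mul h0, ← ENNReal.ofReal_add hδ.le (by positivity)]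
        conv_lhs => rw [← ENNReal.ofReal_toReal hy.ne, ← ENNReal.ofReal_one,
          ← ENNReal.ofReal_sub _ ENNReal.toReal_nonneg]
        apply ENNReal.ofReal_le_ofReal
        have := aux_kl (κ.rnDeriv γ y).toReal δ ENNReal.toReal_nonneg hδ
        rwa [mul_one_div]
    _ = _ := by rw [lintegral_add_left measurable_const]; simp

/-- quadratic cost bounded by second moments. -/
lemma aux_cost {d : ℕ} (p : Euc d × Euc d) : ENNReal.ofReal (‖p.1 - p.2‖ ^ 2) ≤
    2 * ENNReal.ofReal (‖p.1‖ ^ 2) + 2 * ENNReal.ofReal (‖p.2‖ ^ 2) := by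
  have h2 : ∀ r : ℝ, 2 * ENNReal.ofReal r = ENNReal.ofReal (2 * r) := fun r => by
    rw [ENNReal.ofReal_mul (by norm_num)]; simp
  rw [h2, h2, ← ENNReal.ofReal_add (by positivity) (by positivity)]
  apply ENNReal.ofReal_le_ofReal
  have h := norm_sub_le p.1 p.2
  have := norm_nonneg (p.1 - p.2)
  nlinarith [sq_nonneg (‖p.1‖ - ‖p.2‖)]

lemma aux_prod {d : ℕ} (μ ν : Measure (Euc d)) [IsFiniteMeasure μ] [IsFiniteMeasure ν] :
    ∫⁻ p, ENNReal.ofReal (‖p.1 - p.2‖ ^ 2) ∂(μ.prod ν) ≤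
      2 * (∫⁻ y, ENNReal.ofReal (‖y‖ ^ 2) ∂μ) * ν univ
      + 2 * (∫⁻ y, ENNReal.ofReal (‖y‖ ^ 2) ∂ν) * μ univ := by
  refine (lintegral_mono aux_cost).trans ?_
  rw [lintegral_add_left (by fun_prop), lintegral_const_mul _ (by fun_prop),
    lintegral_const_mul _ (by fun_prop)]
  have h1 := lintegral_prod_mul (μ := μ) (ν := ν) (f := fun y => ENNReal.ofReal (‖y‖ ^ 2))
    (g := fun _ => 1) (by fun_prop) (by fun_prop)
  have h2 := lintegral_prod_mul (μ := μ) (ν := ν) (g := fun y => ENNReal.ofReal (‖y‖ ^ 2))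
    (f := fun _ => 1) (by fun_prop) (by fun_prop)
  simp only [mul_one, one_mul, lintegral_const] at h1 h2
  rw [h1, h2]
  apply le_of_eq
  ring

lemma aux_W_fin {d : ℕ} (μ ν : Measure (Euc d)) [IsProbabilityMeasure μ]
    [IsProbabilityMeasure ν] (hμ : FiniteSecondMoment μ) (hν : FiniteSecondMoment ν) :
    W2sq μ ν ≠ ⊤ := by
  refine ne_top_of_le_ne_top ?_ ((iInf₂_le (μ.prod ν) ⟨by simp, by simp⟩).trans (aux_prod μ ν))
  unfold FiniteSecondMoment at hμ hν
  simp only [measure_univ, mul_one]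
  finiteness

lemma aux_recouple {d : ℕ} (κ γ η : Measure (Euc d)) [IsProbabilityMeasure κ]
    [IsProbabilityMeasure γ] [IsProbabilityMeasure η] (hac : κ ≪ γ)
    (π : Measure (Euc d × Euc d)) (h1 : π.fst = κ) (h2 : π.snd = η) :
    ∃ ρ η' : Measure (Euc d), ρ ≤ γ ∧ η' ≤ η ∧
      ρ univ = ∫⁻ y, (1 - κ.rnDeriv γ y) ∂γ ∧ η' univ = ∫⁻ y, (1 - κ.rnDeriv γ y) ∂γ ∧
      W2sq γ η ≤ ∫⁻ p, ENNReal.ofReal (‖p.1 - p.2‖ ^ 2) ∂π +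
        (2 * (∫⁻ y, ENNReal.ofReal (‖y‖ ^ 2) ∂ρ) + 2 * (∫⁻ y, ENNReal.ofReal (‖y‖ ^ 2) ∂η')) := by
  set f := κ.rnDeriv γ with hf
  have hfm : Measurable f := Measure.measurable_rnDeriv _ _
  have : κ.HaveLebesgueDecomposition γ := Measure.haveLebesgueDecomposition_of_sigmaFinite κ γ
  have hκ : γ.withDensity f = κ := Measure.withDensity_rnDeriv_eq _ _ hac
  have hπp : IsProbabilityMeasure π := by
    constructor
    rw [← Measure.fst_univ, h1, measure_univ]
  let g : Euc d → ℝ≥0∞ := fun y => min 1 (f y)⁻¹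
  have hgm : Measurable g := by fun_prop
  have hg1 : ∀ y, g y ≤ 1 := fun y => min_le_left _ _
  have hfg : ∀ᵐ y ∂γ, (f * g) y = min (f y) 1 := by
    filter_upwards [κ.rnDeriv_lt_top γ] with y hy
    change f y * min 1 (f y)⁻¹ = min (f y) 1
    by_cases h0 : f y = 0
    · simp [h0]
    rw [← min_mul_mul_left, mul_one, ENNReal.mul_inv_cancel h0 hy.ne]
  let ρ := γ.withDensity fun y => 1 - f y
  let π1 := π.withDensity fun p => g p.1
  let π2 := π.withDensity fun p => 1 - g p.1
  have hπ12 : π1 + π2 = π := by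
    rw [← withDensity_add_left (by fun_prop)]
    have : ((fun p : Euc d × Euc d => g p.1) + fun p => 1 - g p.1) = 1 := by
      ext p
      simp [add_tsub_cancel_of_le (hg1 p.1)]
    rw [this, withDensity_one]
  have hπ1le : π1 ≤ π := by
    conv_rhs => rw [← hπ12]
    exact Measure.le_add_right le_rfl
  have hπ2le : π2 ≤ π := by
    conv_rhs => rw [← hπ12]
    exact Measure.le_add_left le_rfl
  have hρ1 : π1.fst + ρ = γ := by
    have e1 : π1.fst = κ.withDensity g := by
      ext s hs
      rw [Measure.fst_apply hs, withDensity_apply _ (measurable_fst hs), withDensity_apply _ hs,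
        ← h1, Measure.fst, setLIntegral_map hs hgm measurable_fst]
    rw [e1, ← hκ, ← withDensity_mul _ hfm hgm, withDensity_congr_ae hfg,
      ← withDensity_add_left (by fun_prop)]
    have : ((fun y => min (f y) 1) + fun y => 1 - f y) = 1 := by
      ext y
      simp only [Pi.add_apply, Pi.one_apply]
      rcases le_total (f y) 1 with h | h
      · simp [h]
      · rw [min_eq_right h, tsub_eq_zero_of_le h, add_zero]
    rw [this, withDensity_one]
  have hρle : ρ ≤ γ := by
    conv_rhs => rw [← hρ1]
    exact Measure.le_add_left le_rfl
  have hη12 : π1.snd + π2.snd = η := by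
    rw [← h2, ← hπ12, Measure.snd, Measure.snd, Measure.snd, Measure.map_add _ _ measurable_snd]
  have hη2le : π2.snd ≤ η := by
    conv_rhs => rw [← hη12]
    exact Measure.le_add_left le_rfl
  have hf1 : IsFiniteMeasure π1 := isFiniteMeasure_of_le π hπ1le
  have hf2 : IsFiniteMeasure π2 := isFiniteMeasure_of_le π hπ2le
  have hf3 : IsFiniteMeasure ρ := isFiniteMeasure_of_le γ hρle
  have hρu : ρ univ = ∫⁻ y, (1 - f y) ∂γ := by
    rw [withDensity_apply _ MeasurableSet.univ, Measure.restrict_univ]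
  have hmass : π2.snd univ = ρ univ := by
    have a1 : π1 univ + ρ univ = 1 := by
      rw [← Measure.fst_univ, ← Measure.add_apply, hρ1, measure_univ]
    have a2 : π1 univ + π2 univ = 1 := by
      rw [← Measure.add_apply, hπ12, measure_univ]
    rw [Measure.snd_univ]
    exact (ENNReal.add_right_inj (measure_ne_top π1 univ)).1 (a2.trans a1.symm)
  refine ⟨ρ, π2.snd, hρle, hη2le, hρu, hmass.trans hρu, ?_⟩
  set ε := ρ univ with hε
  have hεt : ε ≠ ⊤ := measure_ne_top _ _
  have hc1 : (π1 + ε⁻¹ • ρ.prod π2.snd).fst = γ := by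
    rw [Measure.fst_add, Measure.fst, Measure.fst, Measure.map_smul, Measure.map_fst_prod, hmass,
      smul_smul]
    by_cases h0 : ε = 0
    · have : ρ = 0 := Measure.measure_univ_eq_zero.1 h0
      rw [← hρ1, this]; simp [Measure.fst]
    · rw [ENNReal.inv_mul_cancel h0 hεt, one_smul]; exact hρ1
  have hc2 : (π1 + ε⁻¹ • ρ.prod π2.snd).snd = η := by
    rw [Measure.snd_add, show (ε⁻¹ • ρ.prod π2.snd).snd = π2.snd by
      rw [Measure.snd, Measure.map_smul, Measure.map_snd_prod, smul_smul, ← hε]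
      by_cases h0 : ε = 0
      · rw [Measure.measure_univ_eq_zero.1 (hmass.trans h0)]; simp
      · rw [ENNReal.inv_mul_cancel h0 hεt, one_smul]]
    exact hη12
  refine (iInf₂_le _ ⟨hc1, hc2⟩).trans ?_
  rw [lintegral_add_measure, lintegral_smul_measure]
  gcongr
  refine (mul_le_mul_right (aux_prod ρ π2.snd) _).trans ?_
  rw [hmass, ← hε, ← add_mul, mul_comm _ ε, ← mul_assoc]
  exact (mul_le_mul_left (ENNReal.inv_mul_le_one ε) _).trans (by rw [one_mul])

lemma aux_stab {d : ℕ} (γ η : Measure (Euc d))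
    [IsProbabilityMeasure γ] [IsProbabilityMeasure η] (hγ : FiniteSecondMoment γ)
    (hη : FiniteSecondMoment η) (e : ℝ≥0∞) (he : 0 < e) :
    ∃ h : ℝ≥0∞, 0 < h ∧ ∀ κ : Measure (Euc d), IsProbabilityMeasure κ → relEnt κ γ ≤ h →
      W2sq γ η ≤ W2sq κ η + e := by
  have he4 : 0 < e / 4 := ENNReal.div_pos he.ne' (by simp)
  obtain ⟨δ1, hδ1, H1⟩ := aux_ui γ (fun y => ENNReal.ofReal (‖y‖ ^ 2)) (by fun_prop) hγ.ne _ he4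
  obtain ⟨δ2, hδ2, H2⟩ := aux_ui η (fun y => ENNReal.ofReal (‖y‖ ^ 2)) (by fun_prop) hη.ne _ he4
  obtain ⟨δ, hδ0, hδ⟩ : ∃ δ : ℝ, 0 < δ ∧ ENNReal.ofReal δ < min δ1 δ2 / 2 := by
    have : 0 < min δ1 δ2 / 2 := ENNReal.half_pos (lt_min hδ1 hδ2).ne'
    obtain ⟨r, hr0, hr⟩ := ENNReal.lt_iff_exists_nnreal_btwn.1 this
    exact ⟨r, by exact_mod_cast hr0, by simpa using hr⟩
  refine ⟨ENNReal.ofReal (δ * δ), by rw [ENNReal.ofReal_pos]; positivity, fun κ hκ hH => ?_⟩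
  have hac : κ ≪ γ := by
    by_contra hc
    rw [relEnt, if_neg (fun h => hc h.1)] at hH
    simp at hH
  have htv : ∫⁻ y, (1 - κ.rnDeriv γ y) ∂γ ≤ min δ1 δ2 := by
    refine (aux_tv κ γ δ hδ0 hac).trans ?_
    calc _ ≤ ENNReal.ofReal δ + ENNReal.ofReal (δ * δ) * ENNReal.ofReal (1 / δ) := by gcongr
      _ = ENNReal.ofReal δ + ENNReal.ofReal δ := by
          rw [← ENNReal.ofReal_mul (by positivity)]
          congr 2
          field_simp
      _ ≤ min δ1 δ2 / 2 + min δ1 δ2 / 2 := by gcongr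
      _ = _ := ENNReal.add_halves _
  conv_rhs => rw [W2sq]
  simp only [ENNReal.iInf_add]
  refine le_iInf₂ fun π hπ => ?_
  obtain ⟨ρ, η', l1, l2, m1, m2, hW⟩ := aux_recouple κ γ η hac π hπ.1 hπ.2
  refine hW.trans ?_
  gcongr
  calc _ ≤ 2 * (e / 4) + 2 * (e / 4) := by
        gcongr
        · exact H1 ρ l1 (m1.trans_le (htv.trans (min_le_left _ _)))
        · exact H2 η' l2 (m2.trans_le (htv.trans (min_le_right _ _)))
    _ = e := by
        rw [← two_mul, ← mul_assoc, show (2 : ℝ≥0∞) * 2 = 4 by norm_num]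
        exact ENNReal.mul_div_cancel (by simp) (by simp)

lemma aux_exp_int {d : ℕ} (b : ℝ) (hb : 0 < b) :
    Integrable (fun v : Euc d => Real.exp (-b * ‖v‖ ^ 2)) := by
  by_contra h
  have h1 := GaussianFourier.integral_rexp_neg_mul_sq_norm (V := Euc d) hb
  rw [integral_undef h] at h1
  have : 0 < (Real.pi / b) ^ (Module.finrank ℝ (Euc d) / 2 : ℝ) := by positivity
  linarith

lemma aux_gd_pos {d : ℕ} (x y : Euc d) : 0 < gaussDensity x y := by
  unfold gaussDensity
  positivity

lemma aux_gd_meas {d : ℕ} (x : Euc d) : Measurable (gaussDensity x) := by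
  unfold gaussDensity
  fun_prop

lemma aux_gd_int {d : ℕ} (x : Euc d) : Integrable (gaussDensity x) := by
  have h := ((aux_exp_int (d := d) (1 / 2) (by norm_num)).comp_sub_right x).const_mul
    ((2 * Real.pi) ^ (-(d : ℝ) / 2))
  refine h.congr (ae_of_all _ fun y => ?_)
  simp only [gaussDensity]
  congr 2
  ring

lemma aux_gd_integral {d : ℕ} (x : Euc d) : ∫ y, gaussDensity x y = 1 := by
  have h1 := GaussianFourier.integral_rexp_neg_mul_sq_norm (V := Euc d) (b := 1 / 2) (by norm_num)
  have h2 := integral_sub_right_eq_self (μ := (volume : Measure (Euc d)))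
    (fun v : Euc d => Real.exp (-(1 / 2) * ‖v‖ ^ 2)) x
  rw [h1] at h2
  have h3 : ∀ y, gaussDensity x y =
      (2 * Real.pi) ^ (-(d : ℝ) / 2) * Real.exp (-(1 / 2) * ‖y - x‖ ^ 2) := fun y => by
    simp only [gaussDensity]
    congr 2
    ring
  simp_rw [h3]
  rw [integral_const_mul, h2]
  have : Real.pi / (1 / 2) = 2 * Real.pi := by ring
  rw [this, finrank_euclideanSpace, Fintype.card_fin, ← Real.rpow_add (by positivity)]
  rw [show -(d : ℝ) / 2 + d / 2 = 0 by ring, Real.rpow_zero]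

lemma aux_gauss_prob {d : ℕ} (x : Euc d) : IsProbabilityMeasure (gaussian x) := by
  constructor
  rw [gaussian, withDensity_apply _ MeasurableSet.univ, Measure.restrict_univ,
    ← ofReal_integral_eq_lintegral_ofReal (aux_gd_int x) (ae_of_all _ fun y => (aux_gd_pos x y).le),
    aux_gd_integral, ENNReal.ofReal_one]

lemma aux_gd_int2 {d : ℕ} (x : Euc d) : Integrable (fun y => gaussDensity x y * ‖y‖ ^ 2) := by
  have h := ((aux_exp_int (d := d) (1 / 4) (by norm_num)).comp_sub_right x).const_mul
    (8 * (2 * Real.pi) ^ (-(d : ℝ) / 2))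
  refine (h.add ((aux_gd_int x).mul_const (2 * ‖x‖ ^ 2))).mono'
    (((aux_gd_meas x).mul (by fun_prop)).aestronglyMeasurable) (ae_of_all _ fun y => ?_)
  have hp := aux_gd_pos x y
  rw [Real.norm_of_nonneg (by positivity)]
  have hn : ‖y‖ ^ 2 ≤ 2 * ‖y - x‖ ^ 2 + 2 * ‖x‖ ^ 2 := by
    have h := norm_add_le (y - x) x
    rw [sub_add_cancel] at h
    nlinarith [sq_nonneg (‖y - x‖ - ‖x‖), norm_nonneg y]
  have he : Real.exp (-‖y - x‖ ^ 2 / 2) * (2 * ‖y - x‖ ^ 2) ≤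
      8 * Real.exp (-(1 / 4) * ‖y - x‖ ^ 2) := by
    have h1 := Real.add_one_le_exp (‖y - x‖ ^ 2 / 4)
    have h2 : Real.exp (-(1 / 4) * ‖y - x‖ ^ 2) =
        Real.exp (-‖y - x‖ ^ 2 / 2) * Real.exp (‖y - x‖ ^ 2 / 4) := by
      rw [← Real.exp_add]; congr 1; ring
    rw [h2]
    nlinarith [Real.exp_pos (-‖y - x‖ ^ 2 / 2)]
  have hc : 0 < (2 * Real.pi) ^ (-(d : ℝ) / 2) := by positivity
  calc gaussDensity x y * ‖y‖ ^ 2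
      ≤ gaussDensity x y * (2 * ‖y - x‖ ^ 2 + 2 * ‖x‖ ^ 2) := by gcongr
    _ = (2 * Real.pi) ^ (-(d : ℝ) / 2) * (Real.exp (-‖y - x‖ ^ 2 / 2) * (2 * ‖y - x‖ ^ 2)) +
        gaussDensity x y * (2 * ‖x‖ ^ 2) := by rw [gaussDensity]; ring
    _ ≤ (2 * Real.pi) ^ (-(d : ℝ) / 2) * (8 * Real.exp (-(1 / 4) * ‖y - x‖ ^ 2)) +
        gaussDensity x y * (2 * ‖x‖ ^ 2) := by gcongr
    _ = _ := by simp only [Pi.add_apply]; ring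

lemma aux_gauss_fsm {d : ℕ} (x : Euc d) : FiniteSecondMoment (gaussian x) := by
  rw [FiniteSecondMoment, gaussian, lintegral_withDensity_eq_lintegral_mul _
    ((aux_gd_meas x).ennreal_ofReal) (by fun_prop)]
  have := (aux_gd_int2 x).lintegral_lt_top
  refine lt_of_le_of_lt (lintegral_mono fun y => ?_) this
  rw [Pi.mul_apply, ENNReal.ofReal_mul (aux_gd_pos x y).le]

lemma aux_fsm_int {d : ℕ} (μ : Measure (Euc d)) [IsProbabilityMeasure μ]
    (h : FiniteSecondMoment μ) : Integrable (fun y : Euc d => y) μ := by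
  have h2 : Integrable (fun y : Euc d => ‖y‖ ^ 2) μ := by
    refine ⟨by fun_prop, ?_⟩
    rw [hasFiniteIntegral_iff_ofReal (ae_of_all _ fun y => by positivity)]
    exact h
  refine (h2.add (integrable_const 1)).mono' (by fun_prop) (ae_of_all _ fun y => ?_)
  simp only [Pi.add_apply]
  nlinarith [sq_nonneg (‖y‖ - 1), norm_nonneg y]

lemma aux_gauss_bary {d : ℕ} (x : Euc d) : bary (gaussian x) = x := by
  have hp := aux_gauss_prob x
  have hi := aux_fsm_int _ (aux_gauss_fsm x)
  have key : ∫ y, (y - x) ∂(gaussian x) = 0 := by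
    have e : ∫ y, (y - x) ∂(gaussian x) = ∫ y, gaussDensity x y • (y - x) := by
      rw [gaussian, integral_withDensity_eq_integral_toReal_smul
        ((aux_gd_meas x).ennreal_ofReal) (ae_of_all _ fun y => ENNReal.ofReal_lt_top)]
      refine integral_congr_ae (ae_of_all _ fun y => ?_)
      simp only [ENNReal.toReal_ofReal (aux_gd_pos x y).le]
    have e2 : ∫ y, gaussDensity x y • (y - x) = ∫ z : Euc d, gaussDensity 0 z • z := by
      rw [← integral_sub_right_eq_self (μ := (volume : Measure (Euc d)))
        (fun z : Euc d => gaussDensity 0 z • z) x]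
      simp [gaussDensity]
    have e3 := integral_neg_eq_self (fun z : Euc d => gaussDensity 0 z • z) volume
    have e4 : ∀ z : Euc d, gaussDensity 0 (-z) • (-z) = -(gaussDensity 0 z • z) := fun z => by
      simp [gaussDensity]
    simp_rw [e4] at e3
    rw [integral_neg] at e3
    rw [e, e2]
    have e5 := eq_neg_iff_add_eq_zero.1 e3.symm
    rw [← two_smul ℝ] at e5
    exact (smul_eq_zero.1 e5).resolve_left (by norm_num)
  rw [integral_sub hi (integrable_const x), integral_const] at key
  simp at key
  exact sub_eq_zero.1 key

lemma aux_ac {d : ℕ} (x : Euc d) : volume ≪ gaussian x :=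
  withDensity_absolutelyContinuous' ((aux_gd_meas x).ennreal_ofReal.aemeasurable)
    (ae_of_all _ fun y => by simpa using aux_gd_pos x y)

lemma aux_ac' {d : ℕ} (x : Euc d) : gaussian x ≪ volume :=
  withDensity_absolutelyContinuous _ _

lemma aux_llr {d : ℕ} (κ : Measure (Euc d)) [IsProbabilityMeasure κ] (x : Euc d)
    (h : κ ≪ volume) : ∀ᵐ y ∂κ, Real.log (κ.rnDeriv (gaussian x) y).toReal =
      Real.log (κ.rnDeriv volume y).toReal - Real.log ((2 * Real.pi) ^ (-(d : ℝ) / 2))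
        + ‖y - x‖ ^ 2 / 2 := by
  have h1 := Measure.rnDeriv_withDensity_right κ volume
    (f := fun y => ENNReal.ofReal (gaussDensity x y)) ((aux_gd_meas x).ennreal_ofReal.aemeasurable)
    (ae_of_all _ fun y => by simpa using aux_gd_pos x y)
    (ae_of_all _ fun y => ENNReal.ofReal_ne_top)
  have h2 := κ.rnDeriv_lt_top (volume : Measure (Euc d))
  filter_upwards [h.ae_le h1, h.ae_le h2, Measure.rnDeriv_pos h] with y y1 y2 y3
  rw [gaussian, y1, ENNReal.toReal_mul, ENNReal.toReal_inv,
    ENNReal.toReal_ofReal (aux_gd_pos x y).le,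
    Real.log_mul (inv_ne_zero (aux_gd_pos x y).ne') (ENNReal.toReal_pos y3.ne' y2.ne).ne',
    Real.log_inv, gaussDensity, Real.log_mul (by positivity) (by positivity), Real.log_exp]
  ring

lemma aux_shift {d : ℕ} (κ : Measure (Euc d)) [IsProbabilityMeasure κ] (x : Euc d)
    (hκ : FiniteSecondMoment κ) :
    relEnt κ (gaussian x) = relEnt κ (gaussian (bary κ)) +
      ENNReal.ofReal (1 / 2 * ‖bary κ - x‖ ^ 2) := by
  set m := bary κ with hm
  have hpx := aux_gauss_prob x
  have hpm := aux_gauss_prob m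
  have hi := aux_fsm_int κ hκ
  by_cases hac : κ ≪ volume
  swap
  · have n1 : ∀ z : Euc d, relEnt κ (gaussian z) = ⊤ := fun z => by
      rw [relEnt, if_neg]
      exact fun h => hac (h.1.trans (aux_ac' z))
    simp [n1]
  have acx : κ ≪ gaussian x := hac.trans (aux_ac x)
  have acm : κ ≪ gaussian m := hac.trans (aux_ac m)
  let l : Euc d → ℝ := fun y => ⟪m - x, y⟫ + (‖x‖ ^ 2 - ‖m‖ ^ 2) / 2
  have hli : Integrable l κ := (hi.const_inner (m - x)).add (integrable_const _)
  have hll : ∫ y, l y ∂κ = 1 / 2 * ‖m - x‖ ^ 2 := by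
    rw [integral_add (hi.const_inner (m - x)) (integrable_const _), integral_inner hi, integral_const]
    change ⟪m - x, m⟫ + _ = _
    rw [norm_sub_sq_real, inner_sub_left, real_inner_self_eq_norm_sq, real_inner_comm]
    simp
    ring
  have hlog : (fun y => Real.log (κ.rnDeriv (gaussian x) y).toReal) =ᵐ[κ]
      (fun y => Real.log (κ.rnDeriv (gaussian m) y).toReal) + l := by
    filter_upwards [aux_llr κ x hac, aux_llr κ m hac] with y h1 h2
    rw [Pi.add_apply, h1, h2]
    simp only [l]
    rw [norm_sub_sq_real, norm_sub_sq_real, inner_sub_left, real_inner_comm y m,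
      real_inner_comm y x]
    ring
  by_cases hint : Integrable (fun y => Real.log (κ.rnDeriv (gaussian m) y).toReal) κ
  · have hintx : Integrable (fun y => Real.log (κ.rnDeriv (gaussian x) y).toReal) κ :=
      (hint.add hli).congr hlog.symm
    have hpos := InformationTheory.integral_llr_add_sub_measure_univ_nonneg acm hint
    rw [llr_def] at hpos
    simp only [probReal_univ, add_sub_cancel_right] at hpos
    rw [relEnt, if_pos ⟨acx, hintx⟩, relEnt, if_pos ⟨acm, hint⟩,
      ← ENNReal.ofReal_add hpos (by positivity), integral_congr_ae hlog, ← hll]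
    congr 1
    exact integral_add hint hli
  · have hintx : ¬ Integrable (fun y => Real.log (κ.rnDeriv (gaussian x) y).toReal) κ := by
      intro h
      apply hint
      refine (h.sub hli).congr ?_
      filter_upwards [hlog] with y hy
      simp [hy]
    rw [relEnt, if_neg (fun h => hintx h.2), relEnt, if_neg (fun h => hint h.2)]
    simp

def auxPhi {d : ℕ} (β : ℝ) (η : Measure (Euc d)) : ℝ≥0∞ :=
  ⨅ (κ : Measure (Euc d))
      (_ : IsProbabilityMeasure κ ∧ FiniteSecondMoment κ ∧ bary κ = bary η),
    relEnt κ (gaussian (bary η)) + ENNReal.ofReal (β / 2) * W2sq κ η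

lemma aux_SB {d : ℕ} (β : ℝ) (x : Euc d) (η : Measure (Euc d)) :
    SBcost β x η = auxPhi β η + ENNReal.ofReal (1 / 2 * ‖bary η - x‖ ^ 2) := by
  simp only [SBcost, auxPhi, ENNReal.iInf_add]
  refine iInf_congr fun κ => iInf_congr fun h => ?_
  have := h.1
  rw [aux_shift κ x h.2.1, h.2.2]
  ring

lemma aux_main {d : ℕ} (η : Measure (Euc d)) [IsProbabilityMeasure η]
    (hη : FiniteSecondMoment η) :
    Tendsto (fun β : ℝ => ENNReal.ofReal (1 / β) * auxPhi β η) (nhdsWithin 0 (Set.Ioi 0))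
      (nhds (ENNReal.ofReal (1 / 2) * W2sq (gaussian (bary η)) η)) := by
  set γ := gaussian (bary η) with hγ
  have hp : IsProbabilityMeasure γ := aux_gauss_prob _
  have hf : FiniteSecondMoment γ := aux_gauss_fsm _
  have hW := aux_W_fin γ η hf hη
  set B := ENNReal.ofReal (1 / 2) * W2sq γ η with hB
  have hBt : B ≠ ⊤ := by finiteness
  have hββ : ∀ β : ℝ, 0 < β → ENNReal.ofReal (1 / β) * ENNReal.ofReal (β / 2)
      = ENNReal.ofReal (1 / 2) := fun β hβ => by
    rw [← ENNReal.ofReal_mul (by positivity)]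
    congr 1
    field_simp
  have hβ1 : ∀ β : ℝ, 0 < β → ENNReal.ofReal (1 / β) * ENNReal.ofReal β = 1 := fun β hβ => by
    rw [← ENNReal.ofReal_mul (by positivity), one_div_mul_cancel hβ.ne', ENNReal.ofReal_one]
  rw [ENNReal.tendsto_nhds hBt]
  intro e he
  obtain ⟨h, hh, H⟩ := aux_stab γ η hf hη e he
  have hlim : Tendsto (fun β : ℝ => ENNReal.ofReal β * B) (nhdsWithin 0 (Set.Ioi 0)) (𝓝 0) := by
    have : Tendsto (fun β : ℝ => ENNReal.ofReal β) (nhdsWithin 0 (Set.Ioi 0)) (𝓝 0) := by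
      have := (ENNReal.continuous_ofReal.tendsto 0).mono_left
        (nhdsWithin_le_nhds (s := Set.Ioi (0 : ℝ)))
      simpa using this
    simpa using ENNReal.Tendsto.mul_const this (Or.inr hBt)
  filter_upwards [self_mem_nhdsWithin, hlim.eventually (gt_mem_nhds hh)] with β hβ hβB
  have hβ : 0 < β := hβ
  constructor
  · rw [tsub_le_iff_right]
    have hne : ENNReal.ofReal (1 / β) ≠ ⊤ := ENNReal.ofReal_ne_top
    have hn0 : ENNReal.ofReal (1 / β) ≠ 0 := by simpa using hβ
    simp only [auxPhi, ENNReal.mul_iInf_of_ne hn0 hne, ENNReal.iInf_add]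
    refine le_iInf₂ fun κ hκ => ?_
    rw [← hγ, mul_add, ← mul_assoc, hββ β hβ]
    rcases le_total (relEnt κ γ) (ENNReal.ofReal β * B) with hle | hle
    · have h1 := H κ hκ.1 (hle.trans hβB.le)
      calc B ≤ ENNReal.ofReal (1 / 2) * (W2sq κ η + e) := by rw [hB]; gcongr
        _ = ENNReal.ofReal (1 / 2) * W2sq κ η + ENNReal.ofReal (1 / 2) * e := mul_add _ _ _
        _ ≤ ENNReal.ofReal (1 / 2) * W2sq κ η + e := by
            gcongr
            refine mul_le_of_le_one_left' ?_
            rw [ENNReal.ofReal_le_one]; norm_num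
        _ ≤ _ := by
            gcongr
            exact le_add_self
    · calc B = ENNReal.ofReal (1 / β) * (ENNReal.ofReal β * B) := by
            rw [← mul_assoc, hβ1 β hβ, one_mul]
        _ ≤ ENNReal.ofReal (1 / β) * relEnt κ γ := by gcongr
        _ ≤ _ := by
            rw [add_assoc]
            exact le_self_add
  · have h0 : relEnt γ γ = 0 := by rw [aux_relEnt, InformationTheory.klDiv_self]
    have h1 : auxPhi β η ≤ ENNReal.ofReal (β / 2) * W2sq γ η := by
      refine (iInf₂_le γ ⟨hp, hf, aux_gauss_bary _⟩).trans ?_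
      rw [← hγ, h0, zero_add]
    calc _ ≤ ENNReal.ofReal (1 / β) * (ENNReal.ofReal (β / 2) * W2sq γ η) := by gcongr
      _ = B := by rw [← mul_assoc, hββ β hβ]
      _ ≤ B + e := le_self_add

/-- Rescaled limit of the Schrödinger--Bass cost as `β → 0`: the Bass (mBB) cost. -/
theorem SBcost_rescaled_limit {d : ℕ} (x : Euc d) (η : Measure (Euc d))
    [IsProbabilityMeasure η] (hη : FiniteSecondMoment η) :
    Tendsto
      (fun β : ℝ => ENNReal.ofReal (1 / β)
        * (SBcost β x η - ENNReal.ofReal (1 / 2 * ‖bary η - x‖ ^ 2)))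
      (nhdsWithin 0 (Set.Ioi 0))
      (nhds (ENNReal.ofReal (1 / 2) * W2sq (gaussian (bary η)) η)) ∧
    (bary η = x →
      Tendsto (fun β : ℝ => ENNReal.ofReal (1 / β) * SBcost β x η)
        (nhdsWithin 0 (Set.Ioi 0))
        (nhds (ENNReal.ofReal (1 / 2) * W2sq (gaussian x) η))) ∧
    (bary η ≠ x →
      Tendsto (fun β : ℝ => ENNReal.ofReal (1 / β) * SBcost β x η)
        (nhdsWithin 0 (Set.Ioi 0)) (nhds ⊤)) := by
  have hmain := aux_main η hη
  refine ⟨?_, ?_, ?_⟩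
  · simpa only [aux_SB, ENNReal.add_sub_cancel_right ENNReal.ofReal_ne_top] using hmain
  · intro hx
    rw [hx] at hmain
    simpa [aux_SB, hx] using hmain
  · intro hx
    have hc : ENNReal.ofReal (1 / 2 * ‖bary η - x‖ ^ 2) ≠ 0 := by
      have : 0 < ‖bary η - x‖ := norm_pos_iff.2 (sub_ne_zero.2 hx)
      exact (ENNReal.ofReal_pos.2 (by positivity)).ne'
    have hinv : Tendsto (fun β : ℝ => ENNReal.ofReal (1 / β)) (nhdsWithin 0 (Set.Ioi 0))
        (nhds ⊤) := by
      simp only [one_div]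
      exact ENNReal.tendsto_ofReal_atTop.comp tendsto_inv_nhdsGT_zero
    have h2 := ENNReal.Tendsto.mul_const (b := ENNReal.ofReal (1 / 2 * ‖bary η - x‖ ^ 2))
      hinv (Or.inl ENNReal.top_ne_zero)
    rw [ENNReal.top_mul hc] at h2
    refine tendsto_of_tendsto_of_tendsto_of_le_of_le h2 tendsto_const_nhds (fun β => ?_)
      (fun β => le_top)
    simp only [aux_SB]
    gcongr
    exact le_add_self
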